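/- Let n ≥ 2 and let j satisfy 1 ≤ j ≤ n²−3. Then the number of reduced decompositions ω = i_1⋯i_{n²} of w_0^B ∈ B_n with (i_j, i_{j+1}, i_{j+2}, i_{j+3}) ∈ {(0,1,0,1), (1,0,1,0)} equals the number of reduced decompositions ω = i_1⋯i_{n²} of w_0^B with (i_1, i_2, i_3, i_4) ∈ {(0,1,0,1), (1,0,1,0)}. -/

import Mathlib

/-- The generator `sᵢ` of the hyperoctahedral group `Bₙ`, realized as a permutation of `ℤ`:
`s₀` swaps `1` and `-1`; for `i ≥ 1`, `sᵢ` swaps `i` with `i+1` and `-i` with `-(i+1)`,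
fixing all other integers. -/
def sB (i : ℕ) : Equiv.Perm ℤ :=
  if i = 0 then Equiv.swap 1 (-1)
  else Equiv.swap (i : ℤ) ((i : ℤ) + 1) * Equiv.swap (-(i : ℤ)) (-((i : ℤ) + 1))

/-- The product `s_{i₁} ⋯ s_{i_ℓ}` corresponding to the word `i₁ ⋯ i_ℓ`. -/
def wordProd (l : List ℕ) : Equiv.Perm ℤ := (l.map sB).prod

/-- The underlying function of the longest element `w₀ᴮ ∈ Bₙ`: `i ↦ -i` on `{-n, …, n}`,
fixing all other integers. -/
def w0BFun (n : ℕ) : ℤ → ℤ := fun i => if -(n : ℤ) ≤ i ∧ i ≤ (n : ℤ) then -i else i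

lemma w0BFun_involutive (n : ℕ) : Function.Involutive (w0BFun n) := by
  intro i
  unfold w0BFun
  split_ifs <;> omega

/-- The longest element `w₀ᴮ ∈ Bₙ`, as a permutation of `ℤ`. -/
def w0B (n : ℕ) : Equiv.Perm ℤ := (w0BFun_involutive n).toPerm

/-- `l` is a reduced decomposition of `w` in `Bₙ`: a word over the alphabet `{0, …, n-1}`
whose product of generators is `w`, of minimal length among all such words. -/
def IsReducedWord (n : ℕ) (w : Equiv.Perm ℤ) (l : List ℕ) : Prop :=
  (∀ i ∈ l, i < n) ∧ wordProd l = w ∧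
    ∀ l' : List ℕ, (∀ i ∈ l', i < n) → wordProd l' = w → l.length ≤ l'.length

/-- `R(w)`, the set of reduced decompositions of `w` in `Bₙ`. -/
def RSet (n : ℕ) (w : Equiv.Perm ℤ) : Set (List ℕ) := {l | IsReducedWord n w l}

/-- The length `ℓ(w)` of `w ∈ Bₙ`: the minimal length of a word over `{0, …, n-1}`
whose product of generators is `w`. -/
noncomputable def lenB (n : ℕ) (w : Equiv.Perm ℤ) : ℕ :=
  sInf {m : ℕ | ∃ l : List ℕ, (∀ i ∈ l, i < n) ∧ wordProd l = w ∧ l.length = m}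

/-- Whether a word begins with `k (k+1) k` or `(k+1) k (k+1)` for some `k ≥ 1`. -/
def isYB : List ℕ → Bool
  | a :: b :: c :: _ => (a != 0 && b == a + 1 && c == a) || (b != 0 && a == b + 1 && c == b + 1)
  | _ => false

/-- The number of Yang–Baxter moves in a word. -/
def ybCount (l : List ℕ) : ℕ :=
  ((Finset.range l.length).filter fun j => isYB (l.drop j) = true).card

/-- Whether a word begins with `0101` or `1010`. -/
def is01 : List ℕ → Bool
  | a :: b :: c :: d :: _ =>
      (a == 0 && b == 1 && c == 0 && d == 1) || (a == 1 && b == 0 && c == 1 && d == 0)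
  | _ => false

/-- The number of 01 moves in a word. -/
def m01Count (l : List ℕ) : ℕ :=
  ((Finset.range l.length).filter fun j => is01 (l.drop j) = true).card

/-- The underlying function of `w_k ∈ Bₙ`: `k ↦ -(k+2)`, `k+2 ↦ -k`, and `i ↦ -i` for all
other `i ∈ {1, …, n}`, extended by `w(-i) = -w(i)` and fixing all integers outside
`{-n, …, -1, 1, …, n}`. -/
def wkFun (n k : ℕ) : ℤ → ℤ := fun i =>
  if -(n : ℤ) ≤ i ∧ i ≤ (n : ℤ) then
    if i = (k : ℤ) then -((k : ℤ) + 2)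
    else if i = (k : ℤ) + 2 then -(k : ℤ)
    else if i = -(k : ℤ) then (k : ℤ) + 2
    else if i = -((k : ℤ) + 2) then (k : ℤ)
    else -i
  else i

/-- The underlying function of `w' ∈ Bₙ`: `1 ↦ 1`, `2 ↦ 2`, and `i ↦ -i` for `3 ≤ i ≤ n`,
extended by `w(-i) = -w(i)` and fixing all integers outside `{-n, …, -1, 1, …, n}`. -/
def wpFun (n : ℕ) : ℤ → ℤ := fun i =>
  if (-(n : ℤ) ≤ i ∧ i ≤ (n : ℤ)) ∧ (i < -2 ∨ 2 < i) then -i else i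

/-- `w`, viewed as a signed permutation of `{1, …, n}` via the values `w(1), …, w(n)`,
contains the signed pattern `p` (given by its list of values `p(1), …, p(m)`). -/
def ContainsPattern (n : ℕ) (w : ℤ → ℤ) (p : List ℤ) : Prop :=
  ∃ j : Fin p.length → ℤ, StrictMono j ∧ (∀ r, 1 ≤ j r ∧ j r ≤ (n : ℤ)) ∧
    (∀ r s, w (j r) < w (j s) ↔ p.get r < p.get s) ∧
    (∀ r, w (j r) < 0 ↔ p.get r < 0)

lemma sB_zero_apply (x : ℤ) : sB 0 x = if x = 1 then -1 else if x = -1 then 1 else x := by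
  simp [sB, Equiv.swap_apply_def]

lemma sB_pos_apply (i : ℕ) (hi : i ≠ 0) (x : ℤ) :
    sB i x = if x = i then (i : ℤ) + 1 else if x = i + 1 then (i : ℤ)
      else if x = -i then -((i : ℤ) + 1) else if x = -((i : ℤ) + 1) then -(i : ℤ) else x := by
  simp only [sB, hi, if_false, Equiv.Perm.mul_apply, Equiv.swap_apply_def]
  split_ifs <;> omega

lemma w0B_apply (n : ℕ) (x : ℤ) :
    w0B n x = if -(n : ℤ) ≤ x ∧ x ≤ (n : ℤ) then -x else x := rfl

lemma sB_commute (n i : ℕ) (hi : i < n) : Commute (sB i) (w0B n) := by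
  ext x
  simp only [Equiv.Perm.mul_apply, w0B_apply]
  rcases eq_or_ne i 0 with rfl | h0
  · simp only [sB_zero_apply]
    split_ifs <;> omega
  · simp only [sB_pos_apply i h0]
    split_ifs <;> omega

lemma wordProd_commute (n : ℕ) (l : List ℕ) (hl : ∀ i ∈ l, i < n) :
    Commute (wordProd l) (w0B n) := by
  induction l with
  | nil => simp [wordProd]
  | cons a t ih =>
    have h : wordProd (a :: t) = sB a * wordProd t := by simp [wordProd]
    rw [h]
    exact (sB_commute n a (hl a (by simp))).mul_left (ih fun i hi => hl i (by simp [hi]))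

lemma wordProd_append (l m : List ℕ) : wordProd (l ++ m) = wordProd l * wordProd m := by
  simp [wordProd]

lemma reduced_rotate (n : ℕ) (l : List ℕ) (k : ℕ) (hk : k ≤ l.length)
    (h : IsReducedWord n (w0B n) l) : IsReducedWord n (w0B n) (l.rotate k) := by
  obtain ⟨h1, h2, h3⟩ := h
  refine ⟨fun i hi => h1 i (List.mem_rotate.1 hi), ?_, ?_⟩
  · rw [List.rotate_eq_drop_append_take hk, wordProd_append]
    have hc := wordProd_commute n (l.take k) fun i hi => h1 i (List.mem_of_mem_take hi)
    have h4 : wordProd (l.take k) * wordProd (l.drop k) = w0B n := by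
      rw [← wordProd_append, List.take_append_drop, h2]
    apply mul_left_cancel (a := wordProd (l.take k))
    rw [← mul_assoc, h4, hc.eq]
  · simpa using h3

/-- The nonzero points of `{-n, …, n}`. -/
noncomputable def ptsB (n : ℕ) : Finset ℤ := (Finset.Icc (-(n : ℤ)) n).erase 0

lemma mem_ptsB (n : ℕ) (x : ℤ) : x ∈ ptsB n ↔ x ≠ 0 ∧ -(n : ℤ) ≤ x ∧ x ≤ n := by
  simp [ptsB]

/-- Weight of an ordered pair. -/
def wtB (p : ℤ × ℤ) : ℕ := if p.1 = -p.2 then 2 else 1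

/-- Weighted number of discordant ordered pairs. -/
noncomputable def invB (n : ℕ) (w : Equiv.Perm ℤ) : ℕ :=
  ∑ p ∈ (ptsB n).offDiag, if (p.1 < p.2 ↔ w p.1 < w p.2) then 0 else wtB p

lemma sB_mem (n i : ℕ) (hi : i < n) (x : ℤ) (hx : x ∈ ptsB n) : sB i x ∈ ptsB n := by
  rw [mem_ptsB] at *
  rcases eq_or_ne i 0 with rfl | h0
  · simp only [sB_zero_apply]
    split_ifs <;> omega
  · simp only [sB_pos_apply i h0]
    split_ifs <;> omega

lemma sB_neg (i : ℕ) (x : ℤ) : sB i (-x) = - sB i x := by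
  rcases eq_or_ne i 0 with rfl | h0
  · simp only [sB_zero_apply]
    split_ifs <;> omega
  · simp only [sB_pos_apply i h0]
    split_ifs <;> omega

lemma sB_invol (i : ℕ) (x : ℤ) : sB i (sB i x) = x := by
  rcases eq_or_ne i 0 with rfl | h0
  · rw [sB_zero_apply x]
    split_ifs <;> rw [sB_zero_apply] <;> split_ifs <;> first | omega | simp_all
  · rw [sB_pos_apply i h0 x]
    split_ifs <;> rw [sB_pos_apply i h0] <;> split_ifs <;> omega

lemma wtB_sB (i : ℕ) (a b : ℤ) : wtB (sB i a, sB i b) = wtB (a, b) := by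
  simp only [wtB, ← sB_neg, (sB i).injective.eq_iff]

lemma invB_sB (n i : ℕ) : invB n (sB i) ≤ 4 := by
  rcases eq_or_ne i 0 with rfl | h0
  · have : invB n (sB 0) ≤ ∑ p ∈ ({(1, -1), (-1, 1)} : Finset (ℤ × ℤ)), wtB p := by
      unfold invB
      rw [← Finset.sum_filter_add_sum_filter_not _ (fun p => p.1 < p.2 ↔ sB 0 p.1 < sB 0 p.2),
        Finset.sum_eq_zero (by intro p hp; rw [if_pos (Finset.mem_filter.1 hp).2]), zero_add]
      refine (Finset.sum_le_sum (g := wtB) ?_).trans (Finset.sum_le_sum_of_subset ?_)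
      · intro p _; split_ifs <;> simp
      · rintro ⟨a, b⟩ hp
        simp only [Finset.mem_filter, Finset.mem_offDiag, mem_ptsB, sB_zero_apply] at hp
        simp only [Finset.mem_insert, Finset.mem_singleton, Prod.mk.injEq]
        obtain ⟨⟨h1, h2, h3⟩, h4⟩ := hp
        split_ifs at h4 <;> omega
    exact this.trans (by decide)
  · have : invB n (sB i) ≤ ∑ p ∈ ({((i : ℤ), (i : ℤ) + 1), ((i : ℤ) + 1, (i : ℤ)),
        (-(i : ℤ), -((i : ℤ) + 1)), (-((i : ℤ) + 1), -(i : ℤ))} : Finset (ℤ × ℤ)), 1 := by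
      unfold invB
      rw [← Finset.sum_filter_add_sum_filter_not _ (fun p => p.1 < p.2 ↔ sB i p.1 < sB i p.2),
        Finset.sum_eq_zero (by intro p hp; rw [if_pos (Finset.mem_filter.1 hp).2]), zero_add]
      have key : ∀ p ∈ (ptsB n).offDiag.filter (fun p => ¬ (p.1 < p.2 ↔ sB i p.1 < sB i p.2)),
          p ∈ ({((i : ℤ), (i : ℤ) + 1), ((i : ℤ) + 1, (i : ℤ)),
        (-(i : ℤ), -((i : ℤ) + 1)), (-((i : ℤ) + 1), -(i : ℤ))} : Finset (ℤ × ℤ)) := by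
        rintro ⟨a, b⟩ hp
        simp only [Finset.mem_filter, Finset.mem_offDiag, mem_ptsB, sB_pos_apply i h0] at hp
        simp only [Finset.mem_insert, Finset.mem_singleton, Prod.mk.injEq]
        obtain ⟨⟨h1, h2, h3⟩, h4⟩ := hp
        split_ifs at h4 <;> omega
      refine (Finset.sum_le_sum (g := fun _ => 1) ?_).trans (Finset.sum_le_sum_of_subset key)
      · intro p hp
        have := key p hp
        obtain ⟨a, b⟩ := p
        simp only [Finset.mem_insert, Finset.mem_singleton, Prod.mk.injEq] at this
        simp only [wtB]
        split_ifs <;> omega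
    refine this.trans ?_
    rw [← Finset.card_eq_sum_ones]
    exact Finset.card_le_four

lemma invB_mul (n i : ℕ) (hi : i < n) (w : Equiv.Perm ℤ) :
    invB n (w * sB i) ≤ invB n w + 4 := by
  have h : invB n w = ∑ p ∈ (ptsB n).offDiag,
      if (sB i p.1 < sB i p.2 ↔ w (sB i p.1) < w (sB i p.2)) then 0 else wtB p := by
    unfold invB
    symm
    have hm : ∀ p ∈ (ptsB n).offDiag, (sB i p.1, sB i p.2) ∈ (ptsB n).offDiag := by
      intro p hp
      rw [Finset.mem_offDiag] at *
      exact ⟨sB_mem n i hi _ hp.1, sB_mem n i hi _ hp.2.1,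
        fun h => hp.2.2 ((sB i).injective h)⟩
    refine Finset.sum_nbij' (fun p => (sB i p.1, sB i p.2)) (fun p => (sB i p.1, sB i p.2))
      hm hm ?_ ?_ ?_
    · intro p _; simp [sB_invol]
    · intro p _; simp [sB_invol]
    · intro p _; simp only [wtB_sB]
  refine le_trans ?_ (Nat.add_le_add_left (invB_sB n i) _)
  rw [h]
  unfold invB
  rw [← Finset.sum_add_distrib]
  refine Finset.sum_le_sum fun p _ => ?_
  simp only [Equiv.Perm.mul_apply]
  by_cases h1 : p.1 < p.2 <;> by_cases h2 : sB i p.1 < sB i p.2 <;>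
    by_cases h3 : w (sB i p.1) < w (sB i p.2) <;> simp [h1, h2, h3]

lemma invB_word (n : ℕ) (l : List ℕ) (hl : ∀ i ∈ l, i < n) :
    invB n (wordProd l) ≤ 4 * l.length := by
  induction l using List.reverseRecOn with
  | nil => simp [wordProd, invB]
  | append_singleton t a ih =>
    have h : wordProd (t ++ [a]) = wordProd t * sB a := by simp [wordProd]
    rw [h]
    have h1 := invB_mul n a (hl a (by simp)) (wordProd t)
    have h2 := ih fun i hi => hl i (by simp [hi])
    simp only [List.length_append, List.length_singleton]
    omega

lemma card_ptsB (n : ℕ) : (ptsB n).card = 2 * n := by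
  rw [ptsB, Finset.card_erase_of_mem (by simp), Int.card_Icc]
  omega

lemma invB_w0 (n : ℕ) : invB n (w0B n) = 4 * n ^ 2 := by
  have h1 : invB n (w0B n) = ∑ p ∈ (ptsB n).offDiag, (1 + if p.1 = -p.2 then 1 else 0) := by
    refine Finset.sum_congr rfl ?_
    rintro ⟨a, b⟩ hp
    simp only [Finset.mem_offDiag, mem_ptsB] at hp
    simp only [w0B_apply, wtB]
    split_ifs <;> omega
  have h2 : ((ptsB n).offDiag.filter fun p => p.1 = -p.2).card = 2 * n := by
    rw [← card_ptsB n]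
    refine Finset.card_nbij' (fun p => p.1) (fun a => (a, -a)) ?_ ?_ ?_ ?_
    · rintro ⟨a, b⟩ hp
      simp only [Finset.coe_filter, Set.mem_ofPred_eq, Finset.mem_offDiag] at hp
      exact hp.1.1
    · intro a ha
      simp only [Finset.mem_coe, mem_ptsB] at ha
      simp only [Finset.coe_filter, Set.mem_ofPred_eq, Finset.mem_offDiag, mem_ptsB]
      omega
    · rintro ⟨a, b⟩ hp
      simp only [Finset.coe_filter, Set.mem_ofPred_eq, Finset.mem_offDiag] at hp
      simp [hp.2]
    · intro a _; rfl
  rw [h1, Finset.sum_add_distrib, ← Finset.card_eq_sum_ones, ← Finset.card_filter, h2,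
    Finset.offDiag_card, card_ptsB]
  have : 2 * n ≤ 2 * n * (2 * n) := by nlinarith [Nat.zero_le n, Nat.le_mul_self n]
  rw [Nat.sub_add_cancel this]
  ring

lemma reduced_length (n : ℕ) (l : List ℕ) (h : IsReducedWord n (w0B n) l) :
    n ^ 2 ≤ l.length := by
  have := invB_word n l h.1
  rw [h.2.1, invB_w0] at this
  omega

lemma take_rotate (l : List ℕ) (k : ℕ) (hk : k + 4 ≤ l.length) :
    (l.rotate k).take 4 = (l.drop k).take 4 := by
  rw [List.rotate_eq_drop_append_take (by omega),
    List.take_append_of_le_length (by simp; omega)]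

/-- For `n ≥ 2` and `1 ≤ j ≤ n² - 3`, the number of reduced decompositions of
`w₀ᴮ ∈ Bₙ` whose letters in positions `j, j+1, j+2, j+3` form `(0,1,0,1)` or
`(1,0,1,0)` equals the number of reduced decompositions of `w₀ᴮ` whose first four
letters form `(0,1,0,1)` or `(1,0,1,0)`. -/
theorem move01_position_equidistributed (n j : ℕ) (hn : 2 ≤ n) (hj1 : 1 ≤ j)
    (hj2 : j ≤ n ^ 2 - 3) :
    Nat.card {l : List ℕ // IsReducedWord n (w0B n) l ∧
        ((l.drop (j - 1)).take 4 = [0, 1, 0, 1] ∨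
          (l.drop (j - 1)).take 4 = [1, 0, 1, 0])}
      = Nat.card {l : List ℕ // IsReducedWord n (w0B n) l ∧
          (l.take 4 = [0, 1, 0, 1] ∨ l.take 4 = [1, 0, 1, 0])} := by
  have hn4 : 2 ^ 2 ≤ n ^ 2 := Nat.pow_le_pow_left hn 2
  have hk : j - 1 + 4 ≤ n ^ 2 := by omega
  refine Nat.card_eq_of_bijective (fun l => ⟨l.1.rotate (j - 1), ?_, ?_⟩) ⟨?_, ?_⟩
  · exact reduced_rotate n l.1 _ (by have := reduced_length n l.1 l.2.1; omega) l.2.1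
  · rw [take_rotate l.1 _ (by have := reduced_length n l.1 l.2.1; omega)]
    exact l.2.2
  · intro l m h
    exact Subtype.ext (List.rotate_injective _ (congrArg Subtype.val h))
  · rintro ⟨l, hl, hp⟩
    have hlen := reduced_length n l hl
    have hr : (l.rotate (l.length - (j - 1))).rotate (j - 1) = l := by
      rw [List.rotate_rotate, Nat.sub_add_cancel (by omega), List.rotate_length]
    refine ⟨⟨l.rotate (l.length - (j - 1)), reduced_rotate n l _ (by omega) hl, ?_⟩,
      Subtype.ext hr⟩
    rw [← take_rotate _ _ (by rw [List.length_rotate]; omega), hr]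
    exact hp
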